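/- arXiv:1805.02309 — 4 statements merged into one kernel-verified Lean document; each statement's English description precedes it below -/
import Mathlib

section
/- Fix 0 < α < 1 and x > 0. If a function f : [0,∞[ → ℝ has a conformable fractional derivative of order α at x, i.e., the limit T_αf(x) = lim_{ε→0} (f(x + ε·x^{1-α}) − f(x))/ε exists, then f is differentiable at x and f′(x) = x^{α-1}·T_αf(x). -/
/-!
Since `x > 0`, the number `x ^ (α - 1)` is positive and inverse to `x ^ (1 - α)`. Substituting
`ε = x ^ (α - 1) * t`, so that `ε * x ^ (1 - α) = t`, turns the conformable difference quotient
into `x ^ (1 - α)` times the ordinary one, and `ε → 0` with `ε ≠ 0` as `t → 0` with `t ≠ 0`.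
-/

open Filter Topology

/-- For `0 < α < 1` and `x > 0`, if the conformable fractional
derivative `T_α f (x)` exists (with value `L`), then `f` is differentiable at `x`
with `f' x = x^{α-1} * L`. -/
theorem differentiable_of_conformable_deriv
    (α x : ℝ) (hα0 : 0 < α) (hα1 : α < 1) (hx : 0 < x) (f : ℝ → ℝ) (L : ℝ)
    (hL : Tendsto (fun ε : ℝ => (f (x + ε * x ^ (1 - α)) - f x) / ε)
      (𝓝[≠] (0 : ℝ)) (𝓝 L)) :
    HasDerivAt f (x ^ (α - 1) * L) x := by
  have hc : 0 < x ^ (α - 1) := Real.rpow_pos_of_pos hx _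
  have hcd : x ^ (α - 1) * x ^ (1 - α) = 1 := by
    rw [← Real.rpow_add hx, show α - 1 + (1 - α) = 0 by ring, Real.rpow_zero]
  have hsub : Tendsto (fun t : ℝ => x ^ (α - 1) * t) (𝓝[≠] 0) (𝓝[≠] 0) := by
    refine tendsto_nhdsWithin_iff.2 ⟨?_, ?_⟩
    · have h : Tendsto (fun t : ℝ => x ^ (α - 1) * t) (𝓝 0) (𝓝 (x ^ (α - 1) * 0)) :=
        tendsto_id.const_mul _
      rw [mul_zero] at h
      exact h.mono_left nhdsWithin_le_nhds
    · filter_upwards [self_mem_nhdsWithin] with t ht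
      exact mul_ne_zero hc.ne' ht
  rw [hasDerivAt_iff_tendsto_slope_zero]
  refine ((hL.comp hsub).const_mul (x ^ (α - 1))).congr' ?_
  filter_upwards [self_mem_nhdsWithin] with t ht
  have ht0 : t ≠ 0 := ht
  have harg : x ^ (α - 1) * t * x ^ (1 - α) = t := by
    rw [mul_right_comm, hcd, one_mul]
  simp only [Function.comp_apply, harg, smul_eq_mul]
  field_simp
end

section
/- Fix 0 < α < 1 and x > 0. A function f : [0,∞[ → ℝ has a Katugampola conformable fractional derivative of order α at x (i.e., the limit U_αf(x) = lim_{ε→0} (f(x·e^{ε·x^{-α}}) − f(x))/ε exists) if and only if f is differentiable at x, in which case U_αf(x) = x^{1-α}·f′(x). -/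
/-!
The Katugampola quotient is the difference quotient at `0` of `ε ↦ f (φ ε)`, where
`φ ε = x * exp (ε * x ^ (-α))`. Since `φ` is a local diffeomorphism sending `0` to `x`, with
`φ' 0 = x ^ (1 - α)` and inverse `y ↦ log (y / x) / x ^ (-α)` on the positive reals, the chain rule
applied to `f ∘ φ`, and to `(f ∘ φ) ∘ φ⁻¹ = f` near `x`, transfers differentiability both ways.
-/

open Filter Topology

lemma katugampola_tendsto_iff_hasDerivAt (α x L : ℝ) (f : ℝ → ℝ) :
    Tendsto (fun ε : ℝ => (f (x * Real.exp (ε * x ^ (-α))) - f x) / ε) (𝓝[≠] (0 : ℝ)) (𝓝 L) ↔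
      HasDerivAt (fun ε : ℝ => f (x * Real.exp (ε * x ^ (-α)))) L 0 := by
  rw [hasDerivAt_iff_tendsto_slope_zero]
  simp [div_eq_inv_mul]

lemma hasDerivAt_of_katugampola {α x L : ℝ} (hx : 0 < x) {f : ℝ → ℝ}
    (h : HasDerivAt (fun ε : ℝ => f (x * Real.exp (ε * x ^ (-α)))) L 0) :
    HasDerivAt f (L / x ^ (1 - α)) x := by
  have hc : 0 < x ^ (-α) := Real.rpow_pos_of_pos hx _
  have hinv : HasDerivAt (fun y : ℝ => Real.log (y / x) / x ^ (-α)) (1 / x ^ (1 - α)) x := by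
    have h1 := (((hasDerivAt_id x).div_const x).log
      (by simp [hx.ne'])).div_const (x ^ (-α))
    refine HasDerivAt.congr_deriv h1 ?_
    rw [sub_eq_add_neg, Real.rpow_add hx, Real.rpow_one]
    simp only [id]
    field_simp
  have h0 : Real.log (x / x) / x ^ (-α) = 0 := by simp [hx.ne']
  have hcomp := HasDerivAt.comp x (h₂ := fun ε : ℝ => f (x * Real.exp (ε * x ^ (-α))))
    (h₂' := L) (by rw [h0]; exact h) hinv
  rw [mul_one_div] at hcomp
  refine hcomp.congr_of_eventuallyEq ?_
  filter_upwards [lt_mem_nhds hx] with y hy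
  simp only [Function.comp]
  rw [div_mul_cancel₀ _ hc.ne', Real.exp_log (div_pos hy hx), mul_div_cancel₀ _ hx.ne']

lemma katugampola_of_hasDerivAt {α x D : ℝ} (hx : 0 < x) {f : ℝ → ℝ} (h : HasDerivAt f D x) :
    HasDerivAt (fun ε : ℝ => f (x * Real.exp (ε * x ^ (-α)))) (x ^ (1 - α) * D) 0 := by
  have hφ : HasDerivAt (fun ε : ℝ => x * Real.exp (ε * x ^ (-α))) (x ^ (1 - α)) 0 := by
    have h1 := (((hasDerivAt_id (0 : ℝ)).mul_const (x ^ (-α))).exp).const_mul x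
    refine HasDerivAt.congr_deriv h1 ?_
    rw [sub_eq_add_neg, Real.rpow_add hx, Real.rpow_one]
    simp
  rw [mul_comm]
  exact HasDerivAt.comp (0 : ℝ) (h₂ := f) (h₂' := D) (by simpa using h) hφ

/-- For `0 < α < 1` and `x > 0`, the Katugampola conformable
fractional derivative `U_α f (x) = lim_{ε→0} (f (x e^{ε x^{-α}}) - f x)/ε` exists
iff `f` is differentiable at `x`, and in that case its value is `x^{1-α} * f' x`. -/
theorem katugampola_deriv_iff_differentiable
    (α x : ℝ) (hα0 : 0 < α) (hα1 : α < 1) (hx : 0 < x) (f : ℝ → ℝ) :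
    ((∃ L : ℝ, Tendsto (fun ε : ℝ => (f (x * Real.exp (ε * x ^ (-α))) - f x) / ε)
        (𝓝[≠] (0 : ℝ)) (𝓝 L)) ↔ DifferentiableAt ℝ f x) ∧
    (∀ L : ℝ, Tendsto (fun ε : ℝ => (f (x * Real.exp (ε * x ^ (-α))) - f x) / ε)
        (𝓝[≠] (0 : ℝ)) (𝓝 L) → L = x ^ (1 - α) * deriv f x) := by
  simp only [katugampola_tendsto_iff_hasDerivAt]
  refine ⟨⟨fun ⟨L, hL⟩ => (hasDerivAt_of_katugampola hx hL).differentiableAt,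
    fun h => ⟨_, katugampola_of_hasDerivAt hx h.hasDerivAt⟩⟩, fun L hL => ?_⟩
  rw [(hasDerivAt_of_katugampola hx hL).deriv,
    mul_div_cancel₀ _ (Real.rpow_pos_of_pos hx _).ne']
end

section
/- Fix 0 < α < 1 and x > 0. If a function f : [0,∞[ → ℝ has a Katugampola conformable fractional derivative of order α at x, i.e., the limit U_αf(x) = lim_{ε→0} (f(x·e^{ε·x^{-α}}) − f(x))/ε exists, then f is differentiable at x and f′(x) = x^{α-1}·U_αf(x). -/
open Filter Topology

/-! The hypothesis says that `g ε = f (x * exp (ε * x ^ (-α)))` has derivative `L` at `0`.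
The inverse change of variable `φ y = log (y / x) * x ^ α` sends `x` to `0` and has derivative
`x ^ (α - 1)` at `x`; since `f = g ∘ φ` on `(0, ∞)`, the chain rule gives the claim. -/

/-- For `0 < α < 1` and `x > 0`, if the Katugampola conformable
fractional derivative `U_α f (x)` exists (with value `L`), then `f` is
differentiable at `x` with `f' x = x^{α-1} * L`. -/
theorem differentiable_of_katugampola_deriv
    (α x : ℝ) (hα0 : 0 < α) (hα1 : α < 1) (hx : 0 < x) (f : ℝ → ℝ) (L : ℝ)
    (hL : Tendsto (fun ε : ℝ => (f (x * Real.exp (ε * x ^ (-α))) - f x) / ε)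
      (𝓝[≠] (0 : ℝ)) (𝓝 L)) :
    HasDerivAt f (x ^ (α - 1) * L) x := by
  have hg : HasDerivAt (fun ε : ℝ => f (x * Real.exp (ε * x ^ (-α)))) L 0 := by
    rw [hasDerivAt_iff_tendsto_slope]
    refine hL.congr fun ε => ?_
    simp [slope_def_field]
  have hφ : HasDerivAt (fun y : ℝ => Real.log (y / x) * x ^ α) (x ^ (α - 1)) x := by
    have h := (((hasDerivAt_id x).div_const x).log (by simp [hx.ne'])).mul_const (x ^ α)
    refine h.congr_deriv ?_
    rw [Real.rpow_sub_one hx.ne', id, div_self hx.ne']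
    field_simp
  have hφx : (0 : ℝ) = Real.log (x / x) * x ^ α := by simp [hx.ne']
  rw [hφx] at hg
  have hc := hg.comp x hφ
  rw [mul_comm]
  refine hc.congr_of_eventuallyEq ?_
  filter_upwards [lt_mem_nhds hx] with y hy
  have hcancel : x ^ α * x ^ (-α) = 1 := by
    rw [← Real.rpow_add hx]; simp
  simp only [Function.comp_apply]
  rw [mul_assoc, hcancel, mul_one, Real.exp_log (div_pos hy hx), mul_div_cancel₀ _ hx.ne']
end

section
/- Fix x₀ > 0 and 0 ≤ α < 1, and let h : [0,∞[ → ℝ be the function h(x) = √(x − x₀) for x ≥ x₀ and h(x) = 0 for x < x₀ (the real square root, vanishing on negatives). Then the limit lim_{ε→0} (h(x₀ + ε·x₀^{1-α}) − h(x₀))/ε does not exist; i.e., there is no real number L such that (h(x₀ + ε·x₀^{1-α}) − h(x₀))/ε tends to L as ε → 0 through nonzero values. -/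
/-!
Put `c = x₀ ^ (1 - α) > 0`. For `ε > 0` the difference quotient is `q ε = √(ε c) / ε`, so
`(q ε) ^ 2 * ε = c`. If `q` had a finite limit `L` at `0`, then letting `ε → 0⁺` would give
`c = L ^ 2 * 0 = 0`, a contradiction.
-/

open Filter Topology

/-- For `x₀ > 0` and `0 ≤ α < 1`, the function
`h(x) = √(x - x₀)` (real square root, vanishing on negative arguments) has no
conformable fractional derivative of order `α` at `x₀`: the limit
`lim_{ε→0} (h(x₀ + ε x₀^{1-α}) - h(x₀))/ε` does not exist. -/
theorem sqrt_shift_not_conformable_differentiable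
    (x₀ α : ℝ) (hx₀ : 0 < x₀) (hα0 : 0 ≤ α) (hα1 : α < 1)
    (h : ℝ → ℝ) (hdef : ∀ x : ℝ, h x = Real.sqrt (x - x₀)) :
    ¬ ∃ L : ℝ, Tendsto (fun ε : ℝ => (h (x₀ + ε * x₀ ^ (1 - α)) - h x₀) / ε)
      (𝓝[≠] (0 : ℝ)) (𝓝 L) := by
  rintro ⟨L, hL⟩
  have hc : 0 < x₀ ^ (1 - α) := Real.rpow_pos_of_pos hx₀ _
  have hq := hL.mono_left (nhdsGT_le_nhdsNE (0 : ℝ))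
  have hε : Tendsto (fun ε : ℝ => ε) (𝓝[>] (0 : ℝ)) (𝓝 0) :=
    tendsto_id.mono_left nhdsWithin_le_nhds
  have hlim := (hq.pow 2).mul hε
  rw [mul_zero] at hlim
  have hconst : Tendsto (fun _ : ℝ => x₀ ^ (1 - α)) (𝓝[>] (0 : ℝ)) (𝓝 0) := by
    refine hlim.congr' ?_
    filter_upwards [self_mem_nhdsWithin] with ε hpos
    have hpos' : 0 < ε := hpos
    rw [hdef, hdef, add_sub_cancel_left, sub_self, Real.sqrt_zero, sub_zero, div_pow,
      Real.sq_sqrt (by positivity)]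
    field_simp
  exact hc.ne (tendsto_nhds_unique hconst tendsto_const_nhds)
end
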